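/- arXiv:2101.07108 — 2 statements merged into one kernel-verified Lean document; each statement's English description precedes it below -/
import Mathlib

section
/- Let (X_{n,θ})_{n∈ℕ, θ∈Θ} and (X_θ)_{θ∈Θ} be random variables on (Ω, F) with values in a separable Banach space B. If (X_θ)_{θ∈Θ} is uniformly tight and (X_{n,θ}) converges uniformly in distribution over Θ to (X_θ), then (X_{n,θ})_{n∈ℕ, θ∈Θ} is sequentially tight. -/
open MeasureTheory ProbabilityTheory Filter
open scoped ENNReal NNReal RealInnerProductSpace

noncomputable section

/-- Bounded-Lipschitz distance between the laws of `U` and `V` under `μ`, i.e. the supremum of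
`|E f(U) - E f(V)|` over functions `f` with values in `[-1, 1]` that are `1`-Lipschitz. -/
def dBL {Ω B : Type*} [MeasurableSpace Ω] [PseudoMetricSpace B]
    (μ : Measure Ω) (U V : Ω → B) : ℝ :=
  ⨆ f : {g : B → ℝ // LipschitzWith 1 g ∧ ∀ x, |g x| ≤ 1},
    |(∫ ω, f.1 (U ω) ∂μ) - ∫ ω, f.1 (V ω) ∂μ|

/-- `(X_{n,θ})` converges uniformly in distribution over `Θ` to `(Xlim_θ)`. -/
def TendstoUnifInDist {Ω Θ B : Type*} [MeasurableSpace Ω] [PseudoMetricSpace B]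
    (P : Θ → Measure Ω) (X : ℕ → Θ → Ω → B) (Xlim : Θ → Ω → B) : Prop :=
  Filter.Tendsto (fun n => ⨆ θ, dBL (P θ) (X n θ) (Xlim θ)) Filter.atTop (nhds 0)

/-- The family `(X_θ)` is uniformly tight over `Θ`. -/
def UniformlyTight {Ω Θ B : Type*} [MeasurableSpace Ω] [TopologicalSpace B]
    (P : Θ → Measure Ω) (X : Θ → Ω → B) : Prop :=
  ∀ ε : ℝ, 0 < ε → ∃ K : Set B, IsCompact K ∧ (⨆ θ, P θ {ω | X θ ω ∉ K}) < ENNReal.ofReal ε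

/-- The family `(X_{n,θ})` is sequentially tight: for every sequence `(θ_n)` in `Θ`, the
sequence of laws of `X_{n, θ_n}` under `P (θ_n)` is tight. -/
def SeqTight {Ω Θ B : Type*} [MeasurableSpace Ω] [TopologicalSpace B]
    (P : Θ → Measure Ω) (X : ℕ → Θ → Ω → B) : Prop :=
  ∀ θs : ℕ → Θ, ∀ ε : ℝ, 0 < ε → ∃ K : Set B, IsCompact K ∧
    ∀ n, P (θs n) {ω | X n (θs n) ω ∉ K} < ENNReal.ofReal ε

/-!
Testing the bounded-Lipschitz distance against a thickened indicator gives
`P(U ∉ thickening r K) ≤ P(V ∉ K) + dBL U V / r` for `0 < r ≤ 1`. Hence a compact set that carries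
most of the mass of every limit has, at every radius, a thickening that carries most of the mass
of all but finitely many terms of the sequence; the remaining terms are individually tight by Ulam's
theorem. So for every `r` some compact set has an `r`-thickening nearly carrying all the laws.
Spreading the allowed loss of mass over radii `r k → 0` and intersecting the closed thickenings
gives a closed, totally bounded set.
-/

section Thickening

variable {α ι : Type*} [PseudoEMetricSpace α]

theorem totallyBounded_of_forall_subset_thickening {s : Set α}
    (h : ∀ r : ℝ, 0 < r → ∃ t, TotallyBounded t ∧ s ⊆ Metric.thickening r t) :
    TotallyBounded s := by
  refine EMetric.totallyBounded_iff.2 fun ε hε => ?_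
  obtain ⟨r, -, hr, hrε⟩ := ENNReal.lt_iff_exists_real_btwn.1 (ENNReal.half_pos hε.ne')
  obtain ⟨t, ht, hst⟩ := h r (ENNReal.ofReal_pos.1 hr)
  obtain ⟨u, hu, htu⟩ := EMetric.totallyBounded_iff.1 ht (ε / 2) (ENNReal.half_pos hε.ne')
  refine ⟨u, hu, fun x hx => ?_⟩
  obtain ⟨y, hy, hxy⟩ := (Metric.mem_thickening_iff_exists_edist_lt t x).1 (hst hx)
  obtain ⟨z, hz, hyz⟩ := Set.mem_iUnion₂.1 (htu hy)
  refine Set.mem_iUnion₂.2 ⟨z, hz, ?_⟩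
  calc edist x z ≤ edist x y + edist y z := edist_triangle x y z
    _ < ε / 2 + ε / 2 := ENNReal.add_lt_add (hxy.trans hrε) hyz
    _ = ε := ENNReal.add_halves ε

theorem isCompact_iInter_cthickening [CompleteSpace α] {r : ι → ℝ} {K : ι → Set α}
    (hr : ∀ ε : ℝ, 0 < ε → ∃ i, r i < ε) (hK : ∀ i, TotallyBounded (K i)) :
    IsCompact (⋂ i, Metric.cthickening (r i) (K i)) := by
  refine isCompact_iff_totallyBounded_isComplete.2
    ⟨totallyBounded_of_forall_subset_thickening fun ε hε => ?_,
      (isClosed_iInter fun i => Metric.isClosed_cthickening).isComplete⟩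
  obtain ⟨i, hi⟩ := hr ε hε
  exact ⟨K i, hK i, (Set.iInter_subset _ i).trans (Metric.cthickening_subset_thickening' hε hi _)⟩

theorem lipschitzWith_one_const_mul_thickenedIndicator {α : Type*} [PseudoMetricSpace α] {r : ℝ}
    (hr : 0 < r) (E : Set α) : LipschitzWith 1 fun x => r * (thickenedIndicator hr E x : ℝ) := by
  refine LipschitzWith.of_dist_le_mul fun x y => ?_
  have h := (lipschitzWith_thickenedIndicator hr E).dist_le_mul x y
  rw [NNReal.coe_inv, Real.coe_toNNReal r hr.le] at h
  calc dist (r * (thickenedIndicator hr E x : ℝ)) (r * (thickenedIndicator hr E y : ℝ))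
      = r * dist (thickenedIndicator hr E x) (thickenedIndicator hr E y) := by
        rw [Real.dist_eq, ← mul_sub, abs_mul, abs_of_pos hr, NNReal.dist_eq]
    _ ≤ r * (r⁻¹ * dist x y) := by gcongr
    _ = (1 : ℝ≥0) * dist x y := by rw [mul_inv_cancel_left₀ hr.ne', NNReal.coe_one, one_mul]

end Thickening

section Tightness

variable {α ι : Type*} [PseudoEMetricSpace α] [CompleteSpace α] [MeasurableSpace α]

theorem isTightMeasureSet_of_forall_measure_compl_thickening_le {S : Set (Measure α)}
    (h : ∀ r : ℝ, 0 < r → ∀ ε : ℝ≥0∞, 0 < ε →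
      ∃ K, TotallyBounded K ∧ ∀ μ ∈ S, μ (Metric.thickening r K)ᶜ ≤ ε) :
    IsTightMeasureSet S := by
  refine isTightMeasureSet_iff_exists_isCompact_measure_compl_le.2 fun ε hε => ?_
  obtain ⟨δ, hδ, hsum⟩ := ENNReal.exists_pos_sum_of_countable' hε.ne' ℕ
  choose K hK hKδ using fun k : ℕ => h (1 / ((k : ℝ) + 1)) Nat.one_div_pos_of_nat (δ k) (hδ k)
  refine ⟨⋂ k : ℕ, Metric.cthickening (1 / ((k : ℝ) + 1)) (K k),
    isCompact_iInter_cthickening (fun _ => exists_nat_one_div_lt) hK,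
    fun μ hμ => ?_⟩
  calc μ (⋂ k : ℕ, Metric.cthickening (1 / ((k : ℝ) + 1)) (K k))ᶜ
      ≤ ∑' k : ℕ, μ (Metric.cthickening (1 / ((k : ℝ) + 1)) (K k))ᶜ := by
        rw [Set.compl_iInter]
        exact measure_iUnion_le _
    _ ≤ ∑' k, δ k := ENNReal.tsum_le_tsum fun k =>
        (measure_mono (Set.compl_subset_compl.2
          (Metric.thickening_subset_cthickening _ _))).trans (hKδ k μ hμ)
    _ ≤ ε := hsum.le

theorem isTightMeasureSet_range_of_eventually_cofinite {μ : ι → Measure α}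
    (hμ : ∀ i, IsTightMeasureSet {μ i})
    (h : ∀ r : ℝ, 0 < r → ∀ ε : ℝ≥0∞, 0 < ε →
      ∃ K, TotallyBounded K ∧ ∀ᶠ i in cofinite, μ i (Metric.thickening r K)ᶜ ≤ ε) :
    IsTightMeasureSet (Set.range μ) := by
  refine isTightMeasureSet_of_forall_measure_compl_thickening_le fun r hr ε hε => ?_
  obtain ⟨K, hK, hKε⟩ := h r hr ε hε
  choose L hL hLε using fun i =>
    isTightMeasureSet_iff_exists_isCompact_measure_compl_le.1 (hμ i) ε hε
  let bad : Set ι := {i | ¬ μ i (Metric.thickening r K)ᶜ ≤ ε}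
  have hbad : bad.Finite := hKε
  refine ⟨K ∪ ⋃ i ∈ bad, L i,
    hK.union (hbad.isCompact_biUnion fun i _ => hL i).totallyBounded, ?_⟩
  rintro _ ⟨i, rfl⟩
  by_cases hi : i ∈ bad
  · have hsub : L i ⊆ Metric.thickening r (K ∪ ⋃ i ∈ bad, L i) :=
      ((Set.subset_biUnion_of_mem hi).trans Set.subset_union_right).trans
        (Metric.self_subset_thickening hr _)
    exact (measure_mono (Set.compl_subset_compl.2 hsub)).trans (hLε i (μ i) rfl)
  · have hsub := Metric.thickening_subset_of_subset r
      (Set.subset_union_left : K ⊆ K ∪ ⋃ i ∈ bad, L i)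
    exact (measure_mono (Set.compl_subset_compl.2 hsub)).trans (not_not.1 hi)

end Tightness

section BoundedLipschitz

variable {Ω B : Type*} [MeasurableSpace Ω] [PseudoMetricSpace B] {μ : Measure Ω}
  [IsFiniteMeasure μ] {U V : Ω → B}

theorem abs_integral_sub_integral_le_two_mul {f g : Ω → ℝ} {C : ℝ} (hf : ∀ ω, |f ω| ≤ C)
    (hg : ∀ ω, |g ω| ≤ C) :
    |∫ ω, f ω ∂μ - ∫ ω, g ω ∂μ| ≤ 2 * (C * μ.real Set.univ) :=
  calc |∫ ω, f ω ∂μ - ∫ ω, g ω ∂μ|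
      ≤ |∫ ω, f ω ∂μ| + |∫ ω, g ω ∂μ| := abs_sub _ _
    _ ≤ C * μ.real Set.univ + C * μ.real Set.univ :=
        add_le_add (norm_integral_le_of_norm_le_const (f := f) (.of_forall hf))
          (norm_integral_le_of_norm_le_const (f := g) (.of_forall hg))
    _ = 2 * (C * μ.real Set.univ) := (two_mul _).symm

theorem abs_integral_sub_integral_le_dBL {f : B → ℝ} (hf : LipschitzWith 1 f)
    (hf1 : ∀ x, |f x| ≤ 1) :
    |∫ ω, f (U ω) ∂μ - ∫ ω, f (V ω) ∂μ| ≤ dBL μ U V := by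
  refine le_ciSup (f := fun g : {g : B → ℝ // LipschitzWith 1 g ∧ ∀ x, |g x| ≤ 1} =>
    |∫ ω, g.1 (U ω) ∂μ - ∫ ω, g.1 (V ω) ∂μ|) ⟨2 * (1 * μ.real Set.univ), ?_⟩ ⟨f, hf, hf1⟩
  rintro _ ⟨g, rfl⟩
  exact abs_integral_sub_integral_le_two_mul (fun ω => g.2.2 (U ω)) fun ω => g.2.2 (V ω)

theorem dBL_le_two_mul_measureReal_univ : dBL μ U V ≤ 2 * μ.real Set.univ :=
  Real.iSup_le (fun g => by
    simpa only [one_mul] using abs_integral_sub_integral_le_two_mul (fun ω => g.2.2 (U ω))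
      fun ω => g.2.2 (V ω)) (by positivity)

variable [MeasurableSpace B] [OpensMeasurableSpace B]

theorem integrable_thickenedIndicator_comp {r : ℝ} (hr : 0 < r) (E : Set B)
    (hU : AEMeasurable U μ) :
    Integrable (fun ω => (thickenedIndicator hr E (U ω) : ℝ)) μ := by
  refine .of_bound (C := 1) ?_ (.of_forall fun ω => ?_)
  · exact ((NNReal.continuous_coe.comp
      (thickenedIndicator hr E).continuous).measurable.comp_aemeasurable hU).aestronglyMeasurable
  · simpa using thickenedIndicator_le_one hr E (U ω)

theorem measureReal_preimage_le_integral_thickenedIndicator {r : ℝ} (hr : 0 < r) (E : Set B)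
    (hU : AEMeasurable U μ) :
    μ.real (U ⁻¹' E) ≤ ∫ ω, (thickenedIndicator hr E (U ω) : ℝ) ∂μ :=
  calc μ.real (U ⁻¹' E)
      ≤ μ.real {ω | (1 : ℝ) ≤ thickenedIndicator hr E (U ω)} :=
        measureReal_mono fun ω hω => one_le_thickenedIndicator_apply B hr hω
    _ ≤ ∫ ω, (thickenedIndicator hr E (U ω) : ℝ) ∂μ := by
        simpa only [one_mul] using mul_meas_ge_le_integral_of_nonneg
          (.of_forall fun ω => NNReal.coe_nonneg _) (integrable_thickenedIndicator_comp hr E hU) 1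

theorem integral_thickenedIndicator_le_measureReal_preimage {r : ℝ} (hr : 0 < r) (E : Set B)
    (hU : AEMeasurable U μ) :
    ∫ ω, (thickenedIndicator hr E (U ω) : ℝ) ∂μ ≤ μ.real (U ⁻¹' Metric.thickening r E) := by
  have hmeas : NullMeasurableSet (U ⁻¹' Metric.thickening r E) μ :=
    hU.nullMeasurableSet_preimage Metric.isOpen_thickening.measurableSet
  calc ∫ ω, (thickenedIndicator hr E (U ω) : ℝ) ∂μ
      ≤ ∫ ω, (U ⁻¹' Metric.thickening r E).indicator (fun _ => (1 : ℝ)) ω ∂μ := by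
        refine integral_mono (integrable_thickenedIndicator_comp hr E hU)
          ((integrable_const 1).indicator₀ hmeas) fun ω => ?_
        by_cases hω : U ω ∈ Metric.thickening r E
        · simpa [hω] using thickenedIndicator_le_one hr E (U ω)
        · simp [hω, thickenedIndicator_zero hr E hω]
    _ = μ.real (U ⁻¹' Metric.thickening r E) := by
        rw [integral_indicator₀ hmeas]
        simp

theorem measureReal_preimage_le_add_dBL_div {r : ℝ} (hr : 0 < r) (hr1 : r ≤ 1) (E : Set B)
    (hU : AEMeasurable U μ) (hV : AEMeasurable V μ) :
    μ.real (V ⁻¹' E) ≤ μ.real (U ⁻¹' Metric.thickening r E) + dBL μ U V / r := by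
  let f : B → ℝ := fun x => thickenedIndicator hr E x
  have hbound : ∀ x, |r * f x| ≤ 1 := fun x => by
    rw [abs_of_nonneg (by positivity)]
    exact mul_le_one₀ hr1 (NNReal.coe_nonneg _) (thickenedIndicator_le_one hr E x)
  have hdist : r * (∫ ω, f (V ω) ∂μ - ∫ ω, f (U ω) ∂μ) ≤ dBL μ U V := by
    have h := (abs_le'.1 (abs_integral_sub_integral_le_dBL (μ := μ) (U := U) (V := V)
      (lipschitzWith_one_const_mul_thickenedIndicator hr E) hbound)).2
    rwa [neg_sub, integral_const_mul, integral_const_mul, ← mul_sub] at h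
  have hdiff : ∫ ω, f (V ω) ∂μ - ∫ ω, f (U ω) ∂μ ≤ dBL μ U V / r :=
    (le_div_iff₀' hr).2 hdist
  linarith [measureReal_preimage_le_integral_thickenedIndicator hr E hV,
    integral_thickenedIndicator_le_measureReal_preimage hr E hU]

theorem measureReal_preimage_compl_thickening_le {r : ℝ} (hr : 0 < r) (hr1 : r ≤ 1) (E : Set B)
    (hU : AEMeasurable U μ) (hV : AEMeasurable V μ) :
    μ.real (U ⁻¹' (Metric.thickening r E)ᶜ) ≤ μ.real (V ⁻¹' Eᶜ) + dBL μ U V / r := by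
  have hcompl : μ.real (U ⁻¹' Metric.thickening r E) + μ.real (U ⁻¹' (Metric.thickening r E)ᶜ)
      = μ.real Set.univ :=
    measureReal_add_measureReal_compl₀
      (hU.nullMeasurableSet_preimage Metric.isOpen_thickening.measurableSet)
  have hunion : μ.real Set.univ ≤ μ.real (V ⁻¹' E) + μ.real (V ⁻¹' Eᶜ) := by
    rw [← Set.union_compl_self (V ⁻¹' E)]
    exact measureReal_union_le _ _
  linarith [measureReal_preimage_le_add_dBL_div hr hr1 E hU hV]

end BoundedLipschitz

section Families

variable {Ω Θ B : Type*} [MeasurableSpace Ω] {P : Θ → Measure Ω} {X : ℕ → Θ → Ω → B}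
  {Xlim : Θ → Ω → B}

theorem UniformlyTight.exists_isCompact_measure_le [TopologicalSpace B]
    (h : UniformlyTight P Xlim) {ε : ℝ} (hε : 0 < ε) :
    ∃ K, IsCompact K ∧ ∀ θ, P θ (Xlim θ ⁻¹' Kᶜ) ≤ ENNReal.ofReal ε := by
  obtain ⟨K, hK, hKε⟩ := h ε hε
  exact ⟨K, hK, fun θ => (le_iSup (fun θ => P θ (Xlim θ ⁻¹' Kᶜ)) θ).trans hKε.le⟩

theorem seqTight_of_isTightMeasureSet_range_map [TopologicalSpace B] [MeasurableSpace B]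
    (hX : ∀ n θ, AEMeasurable (X n θ) (P θ))
    (h : ∀ θs : ℕ → Θ, IsTightMeasureSet (Set.range fun n => (P (θs n)).map (X n (θs n)))) :
    SeqTight P X := by
  intro θs ε hε
  obtain ⟨δ, hδ, hδε⟩ := exists_between (ENNReal.ofReal_pos.2 hε)
  obtain ⟨K, hK, hKδ⟩ := isTightMeasureSet_iff_exists_isCompact_measure_compl_le.1 (h θs) δ hδ
  refine ⟨K, hK, fun n => lt_of_le_of_lt ?_ hδε⟩
  exact (Measure.le_map_apply (hX n (θs n)) Kᶜ).trans (hKδ _ ⟨n, rfl⟩)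

variable [PseudoMetricSpace B] [∀ θ, IsProbabilityMeasure (P θ)]

theorem TendstoUnifInDist.eventually_forall_dBL_lt (h : TendstoUnifInDist P X Xlim) {ε : ℝ}
    (hε : 0 < ε) : ∀ᶠ n in atTop, ∀ θ, dBL (P θ) (X n θ) (Xlim θ) < ε := by
  filter_upwards [h.eventually_lt_const hε] with n hn θ
  have hbdd : BddAbove (Set.range fun θ => dBL (P θ) (X n θ) (Xlim θ)) := by
    refine ⟨2, ?_⟩
    rintro _ ⟨θ, rfl⟩
    simpa using dBL_le_two_mul_measureReal_univ (μ := P θ) (U := X n θ) (V := Xlim θ)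
  exact (le_ciSup hbdd θ).trans_lt hn

variable [MeasurableSpace B]

theorem exists_isCompact_eventually_measure_compl_thickening_le [OpensMeasurableSpace B]
    (hX : ∀ n θ, AEMeasurable (X n θ) (P θ)) (hXlim : ∀ θ, AEMeasurable (Xlim θ) (P θ))
    (htight : UniformlyTight P Xlim) (hconv : TendstoUnifInDist P X Xlim)
    {r : ℝ} (hr : 0 < r) {ε : ℝ≥0∞} (hε : 0 < ε) :
    ∃ K, IsCompact K ∧ ∀ᶠ n in atTop, ∀ θ, P θ (X n θ ⁻¹' (Metric.thickening r K)ᶜ) ≤ ε := by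
  obtain ⟨δ, -, hδ, hδε⟩ := ENNReal.lt_iff_exists_real_btwn.1 hε
  replace hδ : 0 < δ := ENNReal.ofReal_pos.1 hδ
  let s := min r 1
  have hs : 0 < s := lt_min hr one_pos
  obtain ⟨K, hK, hKδ⟩ := htight.exists_isCompact_measure_le (half_pos hδ)
  refine ⟨K, hK, ?_⟩
  filter_upwards [hconv.eventually_forall_dBL_lt (mul_pos (half_pos hδ) hs)] with n hn θ
  have hlim : (P θ).real (Xlim θ ⁻¹' Kᶜ) ≤ δ / 2 :=
    ENNReal.toReal_le_of_le_ofReal (half_pos hδ).le (hKδ θ)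
  have hdist : dBL (P θ) (X n θ) (Xlim θ) / s ≤ δ / 2 := (div_le_iff₀ hs).2 (hn θ).le
  have hreal : (P θ).real (X n θ ⁻¹' (Metric.thickening s K)ᶜ) ≤ δ := by
    linarith [measureReal_preimage_compl_thickening_le hs (min_le_right r 1) K (hX n θ) (hXlim θ)]
  calc P θ (X n θ ⁻¹' (Metric.thickening r K)ᶜ)
      ≤ P θ (X n θ ⁻¹' (Metric.thickening s K)ᶜ) := measure_mono <| Set.preimage_mono <|
        Set.compl_subset_compl.2 <| Metric.thickening_mono (min_le_left r 1) K
    _ ≤ ENNReal.ofReal δ := (ENNReal.le_ofReal_iff_toReal_le (measure_ne_top _ _) hδ.le).2 hreal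
    _ ≤ ε := hδε.le

theorem seqTight_of_tendstoUnifInDist_general [CompleteSpace B]
    [TopologicalSpace.SeparableSpace B] [BorelSpace B]
    (hX : ∀ n θ, AEMeasurable (X n θ) (P θ)) (hXlim : ∀ θ, AEMeasurable (Xlim θ) (P θ))
    (htight : UniformlyTight P Xlim) (hconv : TendstoUnifInDist P X Xlim) :
    SeqTight P X := by
  have : SecondCountableTopology B := UniformSpace.secondCountable_of_separable B
  refine seqTight_of_isTightMeasureSet_range_map hX fun θs =>
    isTightMeasureSet_range_of_eventually_cofinite (fun n => isTightMeasureSet_singleton)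
      fun r hr ε hε => ?_
  obtain ⟨K, hK, hKε⟩ :=
    exists_isCompact_eventually_measure_compl_thickening_le hX hXlim htight hconv hr hε
  refine ⟨K, hK.totallyBounded, ?_⟩
  rw [Nat.cofinite_eq_atTop]
  filter_upwards [hKε] with n hn
  rw [Measure.map_apply_of_aemeasurable (hX n (θs n))
    Metric.isOpen_thickening.measurableSet.compl]
  exact hn (θs n)

end Families

/-- If the family of limits is uniformly tight and `(X_{n,θ})` converges uniformly in
distribution to it, then `(X_{n,θ})` is sequentially tight. -/
theorem seqTight_of_tendstoUnifInDist
    {Ω Θ B : Type*} [MeasurableSpace Ω]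
    [NormedAddCommGroup B] [NormedSpace ℝ B] [CompleteSpace B]
    [TopologicalSpace.SeparableSpace B] [MeasurableSpace B] [BorelSpace B]
    (P : Θ → Measure Ω) (hP : ∀ θ, IsProbabilityMeasure (P θ))
    (X : ℕ → Θ → Ω → B) (Xlim : Θ → Ω → B)
    (hXmeas : ∀ n θ, Measurable (X n θ)) (hXlimmeas : ∀ θ, Measurable (Xlim θ))
    (htight : UniformlyTight P Xlim)
    (hconv : TendstoUnifInDist P X Xlim) :
    SeqTight P X := by
  exact seqTight_of_tendstoUnifInDist_general (fun n θ => (hXmeas n θ).aemeasurable)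
    (fun θ => (hXlimmeas θ).aemeasurable) htight hconv
end
end

section
/- Let (X_{n,θ})_{n∈ℕ, θ∈Θ} and (X_θ)_{θ∈Θ} be random variables on (Ω, F) with values in a separable Hilbert space H. Assume: (i) for every h ∈ H, the real-valued family (⟨X_{n,θ}, h⟩) converges uniformly in distribution over Θ to (⟨X_θ, h⟩); (ii) (X_{n,θ})_{n∈ℕ, θ∈Θ} is sequentially tight; and (iii) (X_θ)_{θ∈Θ} is uniformly tight. Then (X_{n,θ}) converges uniformly in distribution over Θ to (X_θ). -/
open MeasureTheory ProbabilityTheory Filter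
open scoped ENNReal NNReal RealInnerProductSpace

noncomputable section

/-!
Tightness, through Prokhorov's theorem, gives weak limits of laws along ultrafilters, and the test
functions of the bounded-Lipschitz distance form a set that is compact for pointwise convergence.
Along an ultrafilter, test functions nearly attaining the distance therefore converge, uniformly on
compact sets, so tightness lets one replace them by their limit. Hence the distance between two
tight families tends to `0` once their weak limits agree, and these are determined by the
characteristic functions of one-dimensional projections.

Applied to a fixed `θ`, this gives convergence of `X n θ` to `Xlim θ`. For a sequence `θs`, one may
then choose `m k` so large that `X (m k) (θs k)` is within `1 / (k + 1)` of `Xlim (θs k)`. The laws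
of `X k (θs k)` and of `X (m k) (θs k)` are both tight by sequential tightness, and their
projections merge because both are close to those of `Xlim (θs k)`.
-/

open Set Topology

-- Up to the factor `2` a supremum is attained; this avoids a rate `ε n → 0`, so it can be used
-- along arbitrary filters. For unbounded `a` the real supremum is `0`.
lemma exists_iSup_le_two_mul {ι : Type*} [Nonempty ι] {a : ι → ℝ} (ha : ∀ i, 0 ≤ a i) :
    ∃ i, ⨆ j, a j ≤ 2 * a i := by
  rcases (Real.iSup_nonneg ha).eq_or_lt with hzero | hpos
  · exact ⟨Classical.arbitrary ι, by rw [← hzero]; linarith [ha (Classical.arbitrary ι)]⟩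
  · obtain ⟨i, hi⟩ := exists_lt_of_lt_ciSup (half_lt_self hpos)
    exact ⟨i, by linarith⟩

section BLUnitBall

variable {B : Type*} [PseudoMetricSpace B]

/-- The set `BL₁` of test functions in the definition of the bounded-Lipschitz distance, carrying
the topology of pointwise convergence. The index type of the supremum in `dBL` is the subtype of
this set. -/
def BLUnitBall (B : Type*) [PseudoMetricSpace B] : Set (B → ℝ) :=
  {f | LipschitzWith 1 f ∧ ∀ x, |f x| ≤ 1}

instance : Nonempty (BLUnitBall B) :=
  ⟨⟨0, LipschitzWith.const' 0, by simp⟩⟩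

lemma isCompact_blUnitBall : IsCompact (BLUnitBall B) := by
  have hEq : BLUnitBall B = {f | LipschitzWith 1 f} ∩ univ.pi fun _ => Icc (-1) 1 := by
    ext f
    simp only [BLUnitBall, mem_inter_iff, mem_ofPred_eq, mem_univ_pi, mem_Icc, abs_le]
  rw [hEq]
  exact (isCompact_univ_pi fun _ => isCompact_Icc).inter_left (isClosed_setOfPred_lipschitzWith 1)

end BLUnitBall

section dBL

variable {Ω B : Type*} [MeasurableSpace Ω] [PseudoMetricSpace B] {μ : Measure Ω} {U V : Ω → B}

lemma dBL_nonneg : 0 ≤ dBL μ U V :=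
  Real.iSup_nonneg fun _ => abs_nonneg _

lemma dBL_comm : dBL μ U V = dBL μ V U := by
  simp only [dBL, abs_sub_comm]

lemma dBL_le {c : ℝ}
    (h : ∀ f ∈ BLUnitBall B, |(∫ ω, f (U ω) ∂μ) - ∫ ω, f (V ω) ∂μ| ≤ c) : dBL μ U V ≤ c :=
  ciSup_le (ι := BLUnitBall B) fun f => h f f.2

variable (μ U V) in
lemma exists_dBL_le_two_mul : ∃ f ∈ BLUnitBall B,
    dBL μ U V ≤ 2 * |(∫ ω, f (U ω) ∂μ) - ∫ ω, f (V ω) ∂μ| := by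
  obtain ⟨f, hf⟩ := exists_iSup_le_two_mul fun f : BLUnitBall B =>
    abs_nonneg ((∫ ω, f.1 (U ω) ∂μ) - ∫ ω, f.1 (V ω) ∂μ)
  exact ⟨f, f.2, hf⟩

lemma integral_exp_mul_I [IsFiniteMeasure μ] {Y : Ω → ℝ} (hY : AEMeasurable Y μ) :
    ∫ ω, Complex.exp (Y ω * Complex.I) ∂μ =
      (∫ ω, Real.cos (Y ω) ∂μ : ℝ) + (∫ ω, Real.sin (Y ω) ∂μ : ℝ) * Complex.I := by
  have hcos : Integrable (fun ω => Real.cos (Y ω)) μ :=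
    .of_bound (Real.measurable_cos.comp_aemeasurable hY).aestronglyMeasurable 1
      (.of_forall fun ω => Real.abs_cos_le_one (Y ω))
  have hsin : Integrable (fun ω => Real.sin (Y ω)) μ :=
    .of_bound (Real.measurable_sin.comp_aemeasurable hY).aestronglyMeasurable 1
      (.of_forall fun ω => Real.abs_sin_le_one (Y ω))
  rw [← integral_complex_ofReal, ← integral_complex_ofReal, ← integral_mul_const,
    ← integral_add hcos.ofReal (hsin.ofReal.mul_const _)]
  simp only [Complex.exp_mul_I, Complex.ofReal_cos, Complex.ofReal_sin]

variable [IsProbabilityMeasure μ]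

lemma abs_integral_comp_le_one {f : B → ℝ} (hf : f ∈ BLUnitBall B) :
    |∫ ω, f (U ω) ∂μ| ≤ 1 := by
  simpa using norm_integral_le_of_norm_le_const (μ := μ) (f := fun ω => f (U ω))
    (.of_forall fun ω => hf.2 (U ω))

lemma abs_integral_comp_sub_le_two {f : B → ℝ} (hf : f ∈ BLUnitBall B) :
    |(∫ ω, f (U ω) ∂μ) - ∫ ω, f (V ω) ∂μ| ≤ 2 := by
  linarith [abs_sub (∫ ω, f (U ω) ∂μ) (∫ ω, f (V ω) ∂μ),
    abs_integral_comp_le_one (μ := μ) (U := U) hf, abs_integral_comp_le_one (μ := μ) (U := V) hf]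

lemma dBL_le_two : dBL μ U V ≤ 2 :=
  dBL_le fun _ => abs_integral_comp_sub_le_two

lemma abs_integral_comp_sub_le_dBL {f : B → ℝ} (hf : f ∈ BLUnitBall B) :
    |(∫ ω, f (U ω) ∂μ) - ∫ ω, f (V ω) ∂μ| ≤ dBL μ U V :=
  le_ciSup (f := fun f : BLUnitBall B => |(∫ ω, f.1 (U ω) ∂μ) - ∫ ω, f.1 (V ω) ∂μ|)
    ⟨2, forall_mem_range.2 fun f => abs_integral_comp_sub_le_two f.2⟩ ⟨f, hf⟩

lemma dBL_triangle (U V W : Ω → B) : dBL μ U W ≤ dBL μ U V + dBL μ V W :=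
  dBL_le fun _ hf => (abs_sub_le _ _ _).trans
    (add_le_add (abs_integral_comp_sub_le_dBL hf) (abs_integral_comp_sub_le_dBL hf))

lemma norm_integral_exp_mul_I_sub_le {Y Z : Ω → ℝ} (hY : AEMeasurable Y μ)
    (hZ : AEMeasurable Z μ) :
    ‖(∫ ω, Complex.exp (Y ω * Complex.I) ∂μ) - ∫ ω, Complex.exp (Z ω * Complex.I) ∂μ‖ ≤
      2 * dBL μ Y Z := by
  have hcos := abs_integral_comp_sub_le_dBL (μ := μ) (U := Y) (V := Z)
    (f := Real.cos) ⟨Real.lipschitzWith_cos, Real.abs_cos_le_one⟩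
  have hsin := abs_integral_comp_sub_le_dBL (μ := μ) (U := Y) (V := Z)
    (f := Real.sin) ⟨Real.lipschitzWith_sin, Real.abs_sin_le_one⟩
  rw [integral_exp_mul_I hY, integral_exp_mul_I hZ]
  refine (Complex.norm_le_abs_re_add_abs_im _).trans ?_
  simpa [two_mul] using add_le_add hcos hsin

lemma norm_charFunDual_map_sub_le {E : Type*} [NormedAddCommGroup E] [NormedSpace ℝ E]
    [MeasurableSpace E] [OpensMeasurableSpace E] {U V : Ω → E} (hU : AEMeasurable U μ)
    (hV : AEMeasurable V μ) (L : StrongDual ℝ E) :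
    ‖charFunDual (μ.map U) L - charFunDual (μ.map V) L‖ ≤
      2 * dBL μ (fun ω => L (U ω)) fun ω => L (V ω) := by
  have hexp : Continuous fun x => Complex.exp (L x * Complex.I) := by fun_prop
  rw [charFunDual_apply, charFunDual_apply, integral_map hU hexp.aestronglyMeasurable,
    integral_map hV hexp.aestronglyMeasurable]
  exact norm_integral_exp_mul_I_sub_le (L.continuous.measurable.comp_aemeasurable hU)
    (L.continuous.measurable.comp_aemeasurable hV)

end dBL

section Tight

variable {ι B : Type*} [MeasurableSpace B] {l : Filter ι}

lemma tendsto_integral_zero_of_tendstoUniformlyOn {E : Type*} [NormedAddCommGroup E]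
    [NormedSpace ℝ E] [TopologicalSpace B] [T2Space B] [OpensMeasurableSpace B]
    {μ : ι → Measure B} [∀ i, IsProbabilityMeasure (μ i)] (hμ : IsTightMeasureSet (range μ))
    {h : ι → B → E} {C : ℝ} (hC : ∀ i x, ‖h i x‖ ≤ C)
    (hunif : ∀ K, IsCompact K → TendstoUniformlyOn h 0 l K) :
    Tendsto (fun i => ∫ x, h i x ∂μ i) l (𝓝 0) := by
  rw [Metric.tendsto_nhds]
  intro ε hε
  obtain ⟨δ, hδ, hCδ⟩ := exists_pos_mul_lt (half_pos hε) C
  obtain ⟨K, hK, hμK⟩ := isTightMeasureSet_iff_exists_isCompact_measure_compl_le.1 hμ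
    (ENNReal.ofReal δ) (ENNReal.ofReal_pos.2 hδ)
  filter_upwards [Metric.tendstoUniformlyOn_iff.1 (hunif K hK) (ε / 2) (half_pos hε)] with i hi
  have hKm : MeasurableSet Kᶜ := hK.isClosed.measurableSet.compl
  have hint : Integrable (Kᶜ.indicator fun _ => C) (μ i) := (integrable_const C).indicator hKm
  have hbound : ∀ x, ‖h i x‖ ≤ ε / 2 + Kᶜ.indicator (fun _ => C) x := fun x => by
    by_cases hx : x ∈ K
    · simpa [hx] using (hi x hx).le
    · simpa [hx] using (hC i x).trans (by linarith)
  have hreal : (μ i).real Kᶜ ≤ δ :=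
    ENNReal.toReal_le_of_le_ofReal hδ.le (hμK _ (mem_range_self i))
  have hC0 : 0 ≤ C :=
    (norm_nonneg _).trans (hC i (nonempty_of_isProbabilityMeasure (μ i)).some)
  rw [dist_zero_right]
  calc ‖∫ x, h i x ∂μ i‖
      ≤ ∫ x, (ε / 2 + Kᶜ.indicator (fun _ => C) x) ∂μ i :=
        norm_integral_le_of_norm_le ((integrable_const _).add hint) (.of_forall hbound)
    _ = ε / 2 + C * (μ i).real Kᶜ := by
        rw [integral_add (integrable_const _) hint, integral_indicator_const _ hKm]
        simp [mul_comm]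
    _ ≤ ε / 2 + C * δ := by gcongr
    _ < ε := by linarith

lemma exists_tendsto_of_isTightMeasureSet_range [TopologicalSpace B] [T2Space B] [BorelSpace B]
    {μ : ι → ProbabilityMeasure B} (hμ : IsTightMeasureSet (range fun i => (μ i : Measure B)))
    (F : Ultrafilter ι) : ∃ m, Tendsto μ F (𝓝 m) := by
  have hcompact : IsCompact (closure (range μ)) :=
    isCompact_closure_of_isTightMeasureSet (by simpa [range] using hμ)
  obtain ⟨m, -, hm⟩ := hcompact.ultrafilter_le_nhds (F.map μ)
    (tendsto_principal.2 (.of_forall fun i => subset_closure (mem_range_self i)))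
  exact ⟨m, hm⟩

end Tight

lemma tendstoUniformlyOn_of_tendsto_of_lipschitzWith {ι B E : Type*} [PseudoMetricSpace B]
    [PseudoMetricSpace E] {l : Filter ι} {C : ℝ≥0} {f : ι → B → E} {g : B → E}
    (hf : ∀ i, LipschitzWith C (f i)) (hlim : Tendsto f l (𝓝 g)) {K : Set B}
    (hK : IsCompact K) : TendstoUniformlyOn f g l K := by
  have hequi : ∀ K' ∈ {K' : Set B | IsCompact K'}, EquicontinuousOn f K' := fun K' _ =>
    (LipschitzWith.uniformEquicontinuous f C hf).equicontinuous.equicontinuousOn K'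
  have hcover : ⋃₀ {K' : Set B | IsCompact K'} = univ :=
    eq_univ_of_forall fun x => ⟨{x}, isCompact_singleton, rfl⟩
  exact UniformOnFun.tendsto_iff_tendstoUniformlyOn.1
    ((EquicontinuousOn.tendsto_uniformOnFun_iff_pi (fun _ h => h) hcover hequi l g).2 hlim) K hK

lemma integrable_of_mem_blUnitBall {B : Type*} [PseudoMetricSpace B] [MeasurableSpace B]
    [OpensMeasurableSpace B] {μ : Measure B} [IsFiniteMeasure μ] {f : B → ℝ}
    (hf : f ∈ BLUnitBall B) : Integrable f μ :=
  .of_bound hf.1.continuous.aestronglyMeasurable 1 (.of_forall hf.2)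

lemma tendsto_integral_sub_of_mem_blUnitBall {ι B : Type*} [MetricSpace B] [MeasurableSpace B]
    [OpensMeasurableSpace B] {l : Filter ι} {μ : ι → Measure B}
    [∀ i, IsProbabilityMeasure (μ i)] (hμ : IsTightMeasureSet (range μ))
    {f : ι → B → ℝ} {g : B → ℝ} (hf : ∀ i, f i ∈ BLUnitBall B) (hg : g ∈ BLUnitBall B)
    (hlim : Tendsto f l (𝓝 g)) :
    Tendsto (fun i => (∫ x, f i x ∂μ i) - ∫ x, g x ∂μ i) l (𝓝 0) := by
  have hdiff : Tendsto (fun i => ∫ x, (f i x - g x) ∂μ i) l (𝓝 0) := by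
    refine tendsto_integral_zero_of_tendstoUniformlyOn hμ (C := 2) (fun i x => ?_) fun K hK => ?_
    · rw [Real.norm_eq_abs]
      linarith [abs_sub (f i x) (g x), (hf i).2 x, hg.2 x]
    · have hfg := tendstoUniformlyOn_of_tendsto_of_lipschitzWith (fun i => (hf i).1) hlim hK
      simpa [Metric.tendstoUniformlyOn_iff, dist_eq_norm, norm_sub_rev] using hfg
  simpa only [integral_sub (integrable_of_mem_blUnitBall (hf _))
    (integrable_of_mem_blUnitBall hg)] using hdiff

lemma tendsto_charFunDual {ι B : Type*} [NormedAddCommGroup B] [NormedSpace ℝ B]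
    [MeasurableSpace B] [OpensMeasurableSpace B] {l : Filter ι} {μ : ι → ProbabilityMeasure B}
    {m : ProbabilityMeasure B}
    (hμ : Tendsto μ l (𝓝 m)) (L : StrongDual ℝ B) :
    Tendsto (fun i => charFunDual (μ i : Measure B) L) l (𝓝 (charFunDual (m : Measure B) L)) :=
  (ProbabilityMeasure.tendsto_iff_forall_integral_rclike_tendsto ℂ).1 hμ
    (.ofNormedAddCommGroup (fun x => Complex.exp (L x * Complex.I)) (by fun_prop) 1
      fun x => (Complex.norm_exp_ofReal_mul_I (L x)).le)

section Banach

variable {ι B : Type*} [NormedAddCommGroup B] [NormedSpace ℝ B] [CompleteSpace B]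
  [TopologicalSpace.SeparableSpace B] [MeasurableSpace B] [BorelSpace B] {l : Filter ι}

lemma eq_of_tendsto_charFunDual_sub [l.NeBot] {μ ν : ι → ProbabilityMeasure B}
    {m m' : ProbabilityMeasure B} (hμ : Tendsto μ l (𝓝 m)) (hν : Tendsto ν l (𝓝 m'))
    (hsub : ∀ L : StrongDual ℝ B, Tendsto
      (fun i => charFunDual (μ i : Measure B) L - charFunDual (ν i : Measure B) L) l (𝓝 0)) :
    m = m' := by
  have : SecondCountableTopology B := UniformSpace.secondCountable_of_separable B
  have hcharFun : charFunDual (m : Measure B) = charFunDual (m' : Measure B) :=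
    funext fun L => sub_eq_zero.1 (tendsto_nhds_unique
      ((tendsto_charFunDual hμ L).sub (tendsto_charFunDual hν L)) (hsub L))
  exact ProbabilityMeasure.toMeasure_injective (Measure.ext_of_charFunDual hcharFun)

theorem tendsto_integral_sub_of_tendsto_charFunDual_sub {μ ν : ι → Measure B}
    [∀ i, IsProbabilityMeasure (μ i)] [∀ i, IsProbabilityMeasure (ν i)]
    (hμ : IsTightMeasureSet (range μ))
    (hν : IsTightMeasureSet (range ν))
    (hsub : ∀ L : StrongDual ℝ B, Tendsto
      (fun i => charFunDual (μ i) L - charFunDual (ν i) L) l (𝓝 0))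
    {f : ι → B → ℝ} (hf : ∀ i, f i ∈ BLUnitBall B) :
    Tendsto (fun i => (∫ x, f i x ∂μ i) - ∫ x, f i x ∂ν i)
      l (𝓝 0) := by
  rw [tendsto_iff_ultrafilter]
  intro F hF
  obtain ⟨m, hm⟩ := exists_tendsto_of_isTightMeasureSet_range
    (μ := fun i => ⟨μ i, inferInstance⟩) hμ F
  obtain ⟨m', hm'⟩ := exists_tendsto_of_isTightMeasureSet_range
    (μ := fun i => ⟨ν i, inferInstance⟩) hν F
  obtain rfl : m = m' := eq_of_tendsto_charFunDual_sub hm hm' fun L => (hsub L).mono_left hF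
  obtain ⟨g, hg, hfg⟩ : ∃ g ∈ BLUnitBall B, Tendsto f F (𝓝 g) :=
    isCompact_blUnitBall.ultrafilter_le_nhds (F.map f) (tendsto_principal.2 (.of_forall hf))
  have hfμ := tendsto_integral_sub_of_mem_blUnitBall hμ hf hg hfg
  have hfν := tendsto_integral_sub_of_mem_blUnitBall hν hf hg hfg
  let G : BoundedContinuousFunction B ℝ := .ofNormedAddCommGroup g hg.1.continuous 1 hg.2
  have hlim : Tendsto (fun i => (∫ x, g x ∂μ i) - ∫ x, g x ∂ν i) F
      (𝓝 ((∫ x, g x ∂(m : Measure B)) - ∫ x, g x ∂(m : Measure B))) :=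
    (ProbabilityMeasure.tendsto_iff_forall_integral_tendsto.1 hm G).sub
      (ProbabilityMeasure.tendsto_iff_forall_integral_tendsto.1 hm' G)
  have hsum := (hfμ.sub hfν).add hlim
  simp only [sub_self, add_zero] at hsum
  exact hsum.congr fun i => by ring

theorem tendsto_dBL_of_isTightMeasureSet {Ω : Type*} [MeasurableSpace Ω] {P : ι → Measure Ω}
    [∀ i, IsProbabilityMeasure (P i)] {U V : ι → Ω → B} (hU : ∀ i, AEMeasurable (U i) (P i))
    (hV : ∀ i, AEMeasurable (V i) (P i))
    (hUtight : IsTightMeasureSet (range fun i => (P i).map (U i)))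
    (hVtight : IsTightMeasureSet (range fun i => (P i).map (V i)))
    (hproj : ∀ L : StrongDual ℝ B,
      Tendsto (fun i => dBL (P i) (fun ω => L (U i ω)) fun ω => L (V i ω)) l (𝓝 0)) :
    Tendsto (fun i => dBL (P i) (U i) (V i)) l (𝓝 0) := by
  have (i : ι) := Measure.isProbabilityMeasure_map (hU i)
  have (i : ι) := Measure.isProbabilityMeasure_map (hV i)
  choose f hf hdBL using fun i => exists_dBL_le_two_mul (P i) (U i) (V i)
  have hint : Tendsto (fun i => (∫ x, f i x ∂(P i).map (U i)) - ∫ x, f i x ∂(P i).map (V i))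
      l (𝓝 0) :=
    tendsto_integral_sub_of_tendsto_charFunDual_sub hUtight hVtight (fun L =>
      squeeze_zero_norm (fun i => norm_charFunDual_map_sub_le (hU i) (hV i) L)
        (by simpa using (hproj L).const_mul 2)) hf
  have hfm (i : ι) (Q : Measure B) : AEStronglyMeasurable (f i) Q :=
    (hf i).1.continuous.aestronglyMeasurable
  simp only [integral_map (hU _) (hfm _ _),
    integral_map (hV _) (hfm _ _)] at hint
  exact squeeze_zero (fun _ => dBL_nonneg) hdBL (by simpa using hint.abs.const_mul 2)

end Banach

section Families

variable {Ω Θ B : Type*} [MeasurableSpace Ω] {P : Θ → Measure Ω} {X : ℕ → Θ → Ω → B}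

section PseudoMetric

variable [PseudoMetricSpace B] {Xlim : Θ → Ω → B}

lemma TendstoUnifInDist.tendsto_dBL [∀ θ, IsProbabilityMeasure (P θ)]
    (h : TendstoUnifInDist P X Xlim) {ι : Type*} {l : Filter ι} {m : ι → ℕ}
    (hm : Tendsto m l atTop) (θs : ι → Θ) :
    Tendsto (fun i => dBL (P (θs i)) (X (m i) (θs i)) (Xlim (θs i))) l (𝓝 0) :=
  squeeze_zero (fun _ => dBL_nonneg)
    (fun i => le_ciSup (f := fun θ => dBL (P θ) (X (m i) θ) (Xlim θ))
      ⟨2, forall_mem_range.2 fun _ => dBL_le_two⟩ (θs i))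
    (h.comp hm)

lemma tendstoUnifInDist_of_forall_seq
    (h : ∀ θs : ℕ → Θ,
      Tendsto (fun n => dBL (P (θs n)) (X n (θs n)) (Xlim (θs n))) atTop (𝓝 0)) :
    TendstoUnifInDist P X Xlim := by
  rcases isEmpty_or_nonempty Θ with hΘ | hΘ
  · simp [TendstoUnifInDist, Real.iSup_of_isEmpty]
  choose θs hθs using fun n => exists_iSup_le_two_mul fun θ =>
    dBL_nonneg (μ := P θ) (U := X n θ) (V := Xlim θ)
  exact squeeze_zero (fun n => Real.iSup_nonneg fun _ => dBL_nonneg) hθs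
    (by simpa using (h θs).const_mul 2)

end PseudoMetric

-- A sequence `θs` indexed along an injection `m` extends to a full sequence in `Θ`.
lemma SeqTight.isTightMeasureSet_range [TopologicalSpace B] [T2Space B] [MeasurableSpace B]
    [OpensMeasurableSpace B] (h : SeqTight P X) (hX : ∀ n θ, AEMeasurable (X n θ) (P θ))
    {m : ℕ → ℕ} (hm : m.Injective) (θs : ℕ → Θ) :
    IsTightMeasureSet (range fun k => (P (θs k)).map (X (m k) (θs k))) := by
  rw [isTightMeasureSet_iff_exists_isCompact_measure_compl_le]
  intro ε hε
  obtain ⟨δ, -, hδ, hδε⟩ := ENNReal.lt_iff_exists_real_btwn.1 hε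
  obtain ⟨K, hK, hKδ⟩ := h (Function.extend m θs fun _ => θs 0) δ (ENNReal.ofReal_pos.1 hδ)
  refine ⟨K, hK, forall_mem_range.2 fun k => ?_⟩
  rw [Measure.map_apply_of_aemeasurable (hX _ _) hK.isClosed.measurableSet.compl]
  have hk := hKδ (m k)
  rw [hm.extend_apply] at hk
  exact (hk.trans hδε).le

end Families

section Projections

variable {Ω Θ B : Type*} [MeasurableSpace Ω] [NormedAddCommGroup B] [NormedSpace ℝ B]
  [CompleteSpace B] [TopologicalSpace.SeparableSpace B] [MeasurableSpace B] [BorelSpace B]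
  {P : Θ → Measure Ω} [∀ θ, IsProbabilityMeasure (P θ)] {X : ℕ → Θ → Ω → B} {Xlim : Θ → Ω → B}

lemma tendsto_dBL_of_proj (hX : ∀ n θ, AEMeasurable (X n θ) (P θ))
    (hXlim : ∀ θ, AEMeasurable (Xlim θ) (P θ))
    (hproj : ∀ L : StrongDual ℝ B, TendstoUnifInDist P
      (fun n θ ω => L (X n θ ω)) (fun θ ω => L (Xlim θ ω)))
    (hseq : SeqTight P X) (θ : Θ) :
    Tendsto (fun n => dBL (P θ) (X n θ) (Xlim θ)) atTop (𝓝 0) := by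
  have : SecondCountableTopology B := UniformSpace.secondCountable_of_separable B
  have := Measure.isProbabilityMeasure_map (hXlim θ)
  exact tendsto_dBL_of_isTightMeasureSet (fun n => hX n θ) (fun _ => hXlim θ)
    (hseq.isTightMeasureSet_range hX Function.injective_id fun _ => θ)
    (by simpa only [range_const] using isTightMeasureSet_singleton)
    fun L => (hproj L).tendsto_dBL tendsto_id fun _ => θ

theorem tendstoUnifInDist_of_proj_general (hX : ∀ n θ, AEMeasurable (X n θ) (P θ))
    (hXlim : ∀ θ, AEMeasurable (Xlim θ) (P θ))
    (hproj : ∀ L : StrongDual ℝ B, TendstoUnifInDist P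
      (fun n θ ω => L (X n θ ω)) (fun θ ω => L (Xlim θ ω)))
    (hseq : SeqTight P X) :
    TendstoUnifInDist P X Xlim := by
  refine tendstoUnifInDist_of_forall_seq fun θs => ?_
  obtain ⟨m, hm, hclose⟩ : ∃ m : ℕ → ℕ, StrictMono m ∧ ∀ k,
      dBL (P (θs k)) (X (m k) (θs k)) (Xlim (θs k)) < 1 / ((k : ℝ) + 1) :=
    extraction_forall_of_eventually fun k =>
      (tendsto_dBL_of_proj hX hXlim hproj hseq (θs k)).eventually_lt_const Nat.one_div_pos_of_nat
  have hlimit : Tendsto (fun k => dBL (P (θs k)) (X (m k) (θs k)) (Xlim (θs k))) atTop (𝓝 0) :=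
    squeeze_zero (fun _ => dBL_nonneg) (fun k => (hclose k).le)
      tendsto_one_div_add_atTop_nhds_zero_nat
  have hmerge : Tendsto (fun k => dBL (P (θs k)) (X k (θs k)) (X (m k) (θs k))) atTop (𝓝 0) := by
    refine tendsto_dBL_of_isTightMeasureSet (fun k => hX k (θs k)) (fun k => hX (m k) (θs k))
      (hseq.isTightMeasureSet_range hX Function.injective_id θs)
      (hseq.isTightMeasureSet_range hX hm.injective θs) fun L => ?_
    refine squeeze_zero (fun _ => dBL_nonneg)
      (fun k => dBL_triangle _ (fun ω => L (Xlim (θs k) ω)) _) ?_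
    simpa [dBL_comm] using ((hproj L).tendsto_dBL tendsto_id θs).add
      ((hproj L).tendsto_dBL hm.tendsto_atTop θs)
  exact squeeze_zero (fun _ => dBL_nonneg) (fun k => dBL_triangle _ (X (m k) (θs k)) _)
    (by simpa using hmerge.add hlimit)

end Projections

/-- Sufficient conditions for uniform convergence in distribution of Hilbertian random
variables: uniform distributional convergence of all one-dimensional projections, sequential
tightness of the approximating family and uniform tightness of the limit family. -/
theorem tendstoUnifInDist_of_proj
    {Ω Θ H : Type*} [MeasurableSpace Ω]
    [NormedAddCommGroup H] [InnerProductSpace ℝ H] [CompleteSpace H]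
    [TopologicalSpace.SeparableSpace H] [MeasurableSpace H] [BorelSpace H]
    (P : Θ → Measure Ω) (hP : ∀ θ, IsProbabilityMeasure (P θ))
    (X : ℕ → Θ → Ω → H) (Xlim : Θ → Ω → H)
    (hXmeas : ∀ n θ, Measurable (X n θ)) (hXlimmeas : ∀ θ, Measurable (Xlim θ))
    (hproj : ∀ h : H, TendstoUnifInDist P
      (fun n θ ω => ⟪X n θ ω, h⟫) (fun θ ω => ⟪Xlim θ ω, h⟫))
    (hseq : SeqTight P X)
    (htight : UniformlyTight P Xlim) :
    TendstoUnifInDist P X Xlim := by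
  refine tendstoUnifInDist_of_proj_general (fun n θ => (hXmeas n θ).aemeasurable)
    (fun θ => (hXlimmeas θ).aemeasurable) (fun L => ?_) hseq
  obtain ⟨h, rfl⟩ := (InnerProductSpace.toDual ℝ H).surjective L
  simpa only [InnerProductSpace.toDual_apply_apply, real_inner_comm] using hproj h
end
end
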